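/- arXiv:1510.02643 — 2 statements merged into one kernel-verified Lean document; each statement's English description precedes it below -/
import Mathlib

section
/- Let G1 and G2 be connected graphs on the same edge set with L(G1) = L(G2), such that L(G1) has at least two circuits. If the graph co(G1), obtained from G1 by contracting all cut-edges and contracting all but one edge of each series class, has at least 5 vertices, then G1 and G2 are 2-isomorphic. -/
open Finset

/-- A multigraph with vertex type `V`, edge-label type `α`, edge set `E`,
and an endpoints function assigning to each edge an unordered pair of vertices. -/
structure MGraph (V : Type) (α : Type) where
  E : Finset α
  ends : α → Sym2 V

namespace MGraph

variable {V V₁ V₂ : Type} {α : Type} [DecidableEq V] [DecidableEq V₁] [DecidableEq V₂]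
  [DecidableEq α]

/-- `u` and `v` are joined by an edge of `X`. -/
def Adj (G : MGraph V α) (X : Finset α) (u v : V) : Prop :=
  ∃ e ∈ X, G.ends e = s(u, v)

/-- `v` is incident with an edge of `X`. -/
def VIn (G : MGraph V α) (X : Finset α) (v : V) : Prop :=
  ∃ e ∈ X, v ∈ G.ends e

/-- The degree of `v` in the edge set `X` (loops count twice). -/
def degIn (G : MGraph V α) (X : Finset α) (v : V) : ℕ :=
  ∑ e ∈ X, (if G.ends e = s(v, v) then 2 else if v ∈ G.ends e then 1 else 0)

/-- `C` is the edge set of a cycle of `G`: a nonempty connected 2-regular subgraph. -/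
def IsCycle (G : MGraph V α) (C : Finset α) : Prop :=
  C.Nonempty ∧ C ⊆ G.E ∧ (∀ v, G.VIn C v → G.degIn C v = 2) ∧
    ∀ u v, G.VIn C u → G.VIn C v → Relation.ReflTransGen (G.Adj C) u v

/-- The subgraph on edge set `X` contains at least two (distinct) cycles. -/
def TwoCycles (G : MGraph V α) (X : Finset α) : Prop :=
  ∃ C₁ C₂ : Finset α, G.IsCycle C₁ ∧ G.IsCycle C₂ ∧ C₁ ⊆ X ∧ C₂ ⊆ X ∧ C₁ ≠ C₂

/-- `X` is a circuit of the bicircular lift matroid `L(G)`: a minimal edge set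
containing at least two cycles. -/
def LiftCircuit (G : MGraph V α) (X : Finset α) : Prop :=
  X ⊆ G.E ∧ G.TwoCycles X ∧ ∀ Y ⊂ X, ¬ G.TwoCycles Y

/-- `X` is independent in the bicircular lift matroid `L(G)`. -/
def LiftIndep (G : MGraph V α) (X : Finset α) : Prop :=
  X ⊆ G.E ∧ ∀ C ⊆ X, ¬ G.LiftCircuit C

/-- `L(G)` has at least two circuits. -/
def TwoLiftCircuits (G : MGraph V α) : Prop :=
  ∃ X Y : Finset α, G.LiftCircuit X ∧ G.LiftCircuit Y ∧ X ≠ Y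

/-- Equality of the bicircular lift matroids `L(G₁) = L(G₂)` (equal ground sets
and equal circuit collections). -/
def LiftEq (G₁ : MGraph V₁ α) (G₂ : MGraph V₂ α) : Prop :=
  G₁.E = G₂.E ∧ ∀ X : Finset α, G₁.LiftCircuit X ↔ G₂.LiftCircuit X

/-- `G₁` and `G₂` are 2-isomorphic, i.e. their graphic matroids on the common
edge set are equal (equivalently, they have the same cycles). -/
def TwoIso (G₁ : MGraph V₁ α) (G₂ : MGraph V₂ α) : Prop :=
  G₁.E = G₂.E ∧ ∀ X : Finset α, G₁.IsCycle X ↔ G₂.IsCycle X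

/-- `G` has no loops. -/
def Loopless (G : MGraph V α) : Prop := ∀ e ∈ G.E, ¬ (G.ends e).IsDiag

/-- `G` is connected. -/
def Connected (G : MGraph V α) : Prop :=
  ∀ u v : V, Relation.ReflTransGen (G.Adj G.E) u v

/-- `G` is 2-edge-connected: every edge lies in a cycle. -/
def TwoEdgeConnected (G : MGraph V α) : Prop :=
  ∀ e ∈ G.E, ∃ C : Finset α, G.IsCycle C ∧ e ∈ C

/-- `e` is a cut-edge of `G`: an edge contained in no cycle. -/
def IsCutEdge (G : MGraph V α) (e : α) : Prop :=
  e ∈ G.E ∧ ∀ C : Finset α, G.IsCycle C → e ∉ C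

/-- Deletion of the edge `e` from `G`. -/
def delete (G : MGraph V α) (e : α) : MGraph V α :=
  ⟨G.E.erase e, G.ends⟩

/-- Restriction of `G` to the edge set `X`. -/
def restrict (G : MGraph V α) (X : Finset α) : MGraph V α :=
  ⟨G.E ∩ X, G.ends⟩

/-- Contraction of the link `e` with endpoints `u, v`: the edge `e` is deleted
and the vertex `v` is identified with `u`. -/
def contractLink (G : MGraph V α) (e : α) (u v : V) : MGraph V α :=
  ⟨G.E.erase e, fun f => (G.ends f).map (fun w => if w = v then u else w)⟩

/-- `X` is a circuit of the contraction `M/e`, where `M` is the matroid with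
circuit collection `Circ`: the circuits of `M/e` are the minimal nonempty sets of
the form `C \ {e}` with `C` a circuit of `M`. -/
def ContractCircuit (Circ : Finset α → Prop) (e : α) (X : Finset α) : Prop :=
  (X.Nonempty ∧ ∃ C : Finset α, Circ C ∧ X = C.erase e) ∧
    ∀ Y ⊂ X, ¬ (Y.Nonempty ∧ ∃ C : Finset α, Circ C ∧ Y = C.erase e)

/-- `e` and `f` form a series pair: no cycle contains exactly one of them. -/
def SeriesPair (G : MGraph V α) (e f : α) : Prop :=
  e ∈ G.E ∧ f ∈ G.E ∧ ∀ C : Finset α, G.IsCycle C → (e ∈ C ↔ f ∈ C)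

/-- `X` is a series class of `G`: a maximal set of pairwise series edges. -/
def SeriesClass (G : MGraph V α) (X : Finset α) : Prop :=
  X ⊆ G.E ∧ X.Nonempty ∧ (∀ e ∈ X, ∀ f ∈ X, G.SeriesPair e f) ∧
    ∀ g ∈ G.E, (∀ e ∈ X, G.SeriesPair e g) → g ∈ X

/-- `G` is cosimple: no cut-edges and no nontrivial series classes. -/
def CoSimple (G : MGraph V α) : Prop :=
  (∀ e ∈ G.E, ¬ G.IsCutEdge e) ∧
    ∀ e ∈ G.E, ∀ f ∈ G.E, e ≠ f → ¬ G.SeriesPair e f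

/-- `e` and `f` are parallel edges. -/
def Parallel (G : MGraph V α) (e f : α) : Prop :=
  e ≠ f ∧ G.IsCycle {e, f}

/-- `P` is a parallel class of `G`: a maximal set of pairwise parallel non-loop
edges. -/
def ParallelClass (G : MGraph V α) (P : Finset α) : Prop :=
  P ⊆ G.E ∧ P.Nonempty ∧ (∀ e ∈ P, ¬ (G.ends e).IsDiag) ∧
    (∀ e ∈ P, ∀ f ∈ P, e ≠ f → G.Parallel e f) ∧
    ∀ g ∈ G.E, g ∉ P → ¬ (G.ends g).IsDiag → ∃ e ∈ P, ¬ G.Parallel e g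

/-- `P` is the edge set of a path of `G`: nonempty, acyclic, connected, with all
degrees at most two. -/
def IsPath (G : MGraph V α) (P : Finset α) : Prop :=
  P.Nonempty ∧ P ⊆ G.E ∧ (∀ C ⊆ P, ¬ G.IsCycle C) ∧
    (∀ v, G.VIn P v → G.degIn P v ≤ 2) ∧
    ∀ u v, G.VIn P u → G.VIn P v → Relation.ReflTransGen (G.Adj P) u v

/-- `P` is the edge set of a path of `G` with end-vertices `x` and `y`. -/
def PathBetween (G : MGraph V α) (P : Finset α) (x y : V) : Prop :=
  G.IsPath P ∧ x ≠ y ∧ G.degIn P x = 1 ∧ G.degIn P y = 1 ∧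
    ∀ v, G.degIn P v = 1 → v = x ∨ v = y

/-- `P` is the edge set of an ear of `G`: a path contained in a cycle, whose
internal vertices have degree two in `G` and whose end-vertices have degree at
least three in `G`. -/
def IsEar (G : MGraph V α) (P : Finset α) : Prop :=
  G.IsPath P ∧ (∀ v, G.degIn P v = 2 → G.degIn G.E v = 2) ∧
    (∀ v, G.degIn P v = 1 → 3 ≤ G.degIn G.E v) ∧
    ∃ C : Finset α, G.IsCycle C ∧ P ⊆ C

/-- `G` is a subdivision of `K_2^n`: two distinct branch vertices joined by `n`
internally disjoint paths whose edge sets partition `E(G)`. -/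
def IsK2nSub (G : MGraph V α) (n : ℕ) : Prop :=
  ∃ x y : V, x ≠ y ∧ ∃ P : Fin n → Finset α,
    (G.E = Finset.univ.biUnion fun i => P i) ∧
    (∀ i j : Fin n, i ≠ j → Disjoint (P i) (P j)) ∧
    (∀ i : Fin n, G.PathBetween (P i) x y) ∧
    (∀ i j : Fin n, i ≠ j → ∀ v, G.VIn (P i) v → G.VIn (P j) v → v = x ∨ v = y)

/-- `G` is a subdivision of `K_2^n` with the edge `e` lying on one of the `n`
paths. -/
def IsK2nSubThrough (G : MGraph V α) (n : ℕ) (e : α) : Prop :=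
  ∃ x y : V, x ≠ y ∧ ∃ P : Fin n → Finset α,
    (G.E = Finset.univ.biUnion fun i => P i) ∧
    (∀ i j : Fin n, i ≠ j → Disjoint (P i) (P j)) ∧
    (∀ i : Fin n, G.PathBetween (P i) x y) ∧
    (∀ i j : Fin n, i ≠ j → ∀ v, G.VIn (P i) v → G.VIn (P j) v → v = x ∨ v = y) ∧
    ∃ i : Fin n, e ∈ P i

/-- `T` is the edge set of a spanning tree of `G`. -/
def IsSpanningTree (G : MGraph V α) (T : Finset α) : Prop :=
  T ⊆ G.E ∧ (∀ C ⊆ T, ¬ G.IsCycle C) ∧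
    ∀ u v : V, Relation.ReflTransGen (G.Adj T) u v

end MGraph

/-- `D` is a valid set of edges to contract in forming `co(G)`: it contains all
cut-edges and all but exactly one edge of each series class containing a
non-cut-edge. The quotient of the vertex set by the edges of `D` gives the
vertex set of `co(G)`. -/
def MGraph.IsCoContractSet {V α : Type} [DecidableEq V] [DecidableEq α]
    (G : MGraph V α) (D : Finset α) : Prop :=
  D ⊆ G.E ∧ (∀ e : α, G.IsCutEdge e → e ∈ D) ∧
    ∀ X : Finset α, G.SeriesClass X → (∃ e ∈ X, ¬ G.IsCutEdge e) → (X \ D).card = 1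

section CoordinateFunctionals

variable {ι : Type*}

/-- The coordinate functional `z ↦ z e` on a binary linear space of functions. -/
def coordOn (Z : Submodule (ZMod 2) (ι → ZMod 2)) (e : ι) : Module.Dual (ZMod 2) Z :=
  (LinearMap.proj e).comp Z.subtype

/-- `Z` contains two distinct nonzero vectors that vanish on `J`. -/
def HasTwoVanishingOn (Z : Submodule (ZMod 2) (ι → ZMod 2)) (J : Finset ι) : Prop :=
  ∃ a ∈ Z, ∃ b ∈ Z, a ≠ 0 ∧ b ≠ 0 ∧ a ≠ b ∧ ∀ e ∈ J, a e = 0 ∧ b e = 0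

/-- The indicator vector of `K` is orthogonal to `Z`. -/
def SumZeroOn (Z : Submodule (ZMod 2) (ι → ZMod 2)) (K : Finset ι) : Prop :=
  ∀ z ∈ Z, ∑ e ∈ K, z e = 0

lemma ZMod.eq_zero_or_one_of_two (c : ZMod 2) : c = 0 ∨ c = 1 := by
  revert c; decide

lemma hasTwoVanishingOn_iff_finrank [Finite ι] (Z : Submodule (ZMod 2) (ι → ZMod 2))
    (J : Finset ι) :
    HasTwoVanishingOn Z J ↔
      1 < Module.finrank (ZMod 2)
        (Submodule.span (ZMod 2) (coordOn Z '' (J : Set ι))).dualCoannihilator := by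
  set S := (Submodule.span (ZMod 2) (coordOn Z '' (J : Set ι))).dualCoannihilator with hS
  have hmem : ∀ z : Z, z ∈ S ↔ ∀ e ∈ J, z.1 e = 0 := by
    intro z
    rw [hS, ← SetLike.mem_coe, Submodule.coe_dualCoannihilator_span]
    simp [coordOn]
  constructor
  · rintro ⟨a, ha, b, hb, ha0, hb0, hab, hJ⟩
    by_contra! hle
    obtain ⟨v, hv⟩ := finrank_le_one_iff.1 hle
    obtain ⟨c, hc⟩ := hv ⟨⟨a, ha⟩, (hmem _).2 fun e he => (hJ e he).1⟩
    obtain ⟨d, hd⟩ := hv ⟨⟨b, hb⟩, (hmem _).2 fun e he => (hJ e he).2⟩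
    replace hc := congrArg (fun x : S => x.1.1) hc
    replace hd := congrArg (fun x : S => x.1.1) hd
    rcases ZMod.eq_zero_or_one_of_two c with rfl | rfl
    · exact ha0 (by simpa using hc.symm)
    rcases ZMod.eq_zero_or_one_of_two d with rfl | rfl
    · exact hb0 (by simpa using hd.symm)
    exact hab (hc.symm.trans hd)
  · intro hlt
    by_contra hno
    refine hlt.not_ge ?_
    by_cases htriv : ∃ v : S, v ≠ 0
    · obtain ⟨v, hv⟩ := htriv
      refine finrank_le_one v fun w => ?_
      by_cases hw : w = 0
      · exact ⟨0, by simp [hw]⟩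
      by_cases hvw : v = w
      · exact ⟨1, by simp [hvw]⟩
      refine absurd ⟨v.1.1, v.1.2, w.1.1, w.1.2, ?_, ?_, ?_, ?_⟩ hno
      · simpa using hv
      · simpa using hw
      · exact fun h => hvw (Subtype.ext (Subtype.ext h))
      · exact fun e he => ⟨(hmem _).1 v.2 e he, (hmem _).1 w.2 e he⟩
    · push Not at htriv
      exact finrank_le_one 0 fun w => ⟨0, by simp [htriv w]⟩

lemma span_range_coordOn [Finite ι] (Z : Submodule (ZMod 2) (ι → ZMod 2)) :
    Submodule.span (ZMod 2) (Set.range (coordOn Z)) = ⊤ := by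
  have h : (Submodule.span (ZMod 2) (Set.range (coordOn Z))).dualCoannihilator = ⊥ := by
    rw [eq_bot_iff]
    intro z hz
    rw [← SetLike.mem_coe, Submodule.coe_dualCoannihilator_span] at hz
    simp only [Submodule.mem_bot]
    ext e
    exact hz _ ⟨e, rfl⟩
  have h2 := Subspace.finrank_add_finrank_dualCoannihilator_eq
    (Submodule.span (ZMod 2) (Set.range (coordOn Z)))
  rw [h, finrank_bot, add_zero] at h2
  exact Submodule.eq_top_of_finrank_eq (h2.trans (Subspace.dual_finrank_eq).symm)

lemma finrank_le_succ_card_of_not_hasTwoVanishingOn [Finite ι]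
    {Z : Submodule (ZMod 2) (ι → ZMod 2)} {J : Finset ι} (h : ¬ HasTwoVanishingOn Z J) :
    Module.finrank (ZMod 2) Z ≤
      Module.finrank (ZMod 2) (Submodule.span (ZMod 2) (coordOn Z '' (J : Set ι))) + 1 := by
  rw [hasTwoVanishingOn_iff_finrank] at h
  have := Subspace.finrank_add_finrank_dualCoannihilator_eq
    (Submodule.span (ZMod 2) (coordOn Z '' (J : Set ι)))
  omega

lemma not_hasTwoVanishingOn_of_linearIndepOn [Finite ι]
    {Z : Submodule (ZMod 2) (ι → ZMod 2)} {J : Finset ι}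
    (h : LinearIndepOn (ZMod 2) (coordOn Z) (J : Set ι))
    (hJ : Module.finrank (ZMod 2) Z ≤ J.card + 1) : ¬ HasTwoVanishingOn Z J := by
  rw [hasTwoVanishingOn_iff_finrank]
  have h1 := Subspace.finrank_add_finrank_dualCoannihilator_eq
    (Submodule.span (ZMod 2) (coordOn Z '' (J : Set ι)))
  have h2 := finrank_span_eq_card h
  rw [← Set.image_eq_range] at h2
  simp only [Finset.coe_sort_coe, Fintype.card_coe] at h2
  omega

lemma span_coordOn_image_finrank_le_card (Z : Submodule (ZMod 2) (ι → ZMod 2)) (J : Finset ι) :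
    Module.finrank (ZMod 2) (Submodule.span (ZMod 2) (coordOn Z '' (J : Set ι))) ≤ J.card := by
  classical
  rw [← Finset.coe_image]
  exact (finrank_span_finset_le_card _).trans Finset.card_image_le

lemma exists_linearIndepOn_superset [Finite ι] {Z : Submodule (ZMod 2) (ι → ZMod 2)}
    {J : Finset ι} (h : LinearIndepOn (ZMod 2) (coordOn Z) (J : Set ι))
    (hJ : J.card + 1 ≤ Module.finrank (ZMod 2) Z) :
    ∃ J' : Finset ι, J ⊆ J' ∧ LinearIndepOn (ZMod 2) (coordOn Z) (J' : Set ι) ∧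
      J'.card + 1 = Module.finrank (ZMod 2) Z := by
  classical
  have := Fintype.ofFinite ι
  obtain ⟨b, hb, hJb, hspan, hlin⟩ := exists_linearIndepOn_extension h (Set.subset_univ _)
  have hfin : b.Finite := b.toFinite
  lift b to Finset ι using hfin
  have htop : Submodule.span (ZMod 2) (coordOn Z '' (b : Set ι)) = ⊤ := by
    rw [eq_top_iff, ← span_range_coordOn Z, Submodule.span_le, ← Set.image_univ]
    exact hspan
  have hcard : Module.finrank (ZMod 2) Z ≤ b.card := by
    have := span_coordOn_image_finrank_le_card Z b
    rwa [htop, finrank_top, Subspace.dual_finrank_eq] at this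
  obtain ⟨J', h1, h2, h3⟩ := Finset.exists_subsuperset_card_eq
    (Finset.coe_subset.1 hJb) (n := Module.finrank (ZMod 2) Z - 1) (by omega) (by omega)
  exact ⟨J', h1, hlin.mono (Finset.coe_subset.2 h2), by omega⟩

lemma finrank_le_of_hasTwoVanishingOn_iff [Finite ι] {Z₁ Z₂ : Submodule (ZMod 2) (ι → ZMod 2)}
    (h : ∀ J, HasTwoVanishingOn Z₁ J ↔ HasTwoVanishingOn Z₂ J)
    (hpos : 1 ≤ Module.finrank (ZMod 2) Z₁) :
    Module.finrank (ZMod 2) Z₂ ≤ Module.finrank (ZMod 2) Z₁ := by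
  obtain ⟨J, -, hJ, hcard⟩ := exists_linearIndepOn_superset (Z := Z₁) (J := ∅)
    (by simp) (by simpa using hpos)
  have h2 := mt (h J).2 (not_hasTwoVanishingOn_of_linearIndepOn hJ hcard.ge)
  have h3 := finrank_le_succ_card_of_not_hasTwoVanishingOn h2
  have h4 := span_coordOn_image_finrank_le_card Z₂ J
  omega

lemma linearIndepOn_coordOn_of_hasTwoVanishingOn_iff [Finite ι]
    {Z₁ Z₂ : Submodule (ZMod 2) (ι → ZMod 2)}
    (h : ∀ J, HasTwoVanishingOn Z₁ J ↔ HasTwoVanishingOn Z₂ J)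
    (hr : Module.finrank (ZMod 2) Z₁ = Module.finrank (ZMod 2) Z₂) {J : Finset ι}
    (hJ : J.card + 1 ≤ Module.finrank (ZMod 2) Z₁)
    (hlin : LinearIndepOn (ZMod 2) (coordOn Z₁) (J : Set ι)) :
    LinearIndepOn (ZMod 2) (coordOn Z₂) (J : Set ι) := by
  obtain ⟨J', hJJ', hJ', hcard⟩ := exists_linearIndepOn_superset hlin hJ
  have h2 := mt (h J').2 (not_hasTwoVanishingOn_of_linearIndepOn hJ' hcard.ge)
  have h3 := finrank_le_succ_card_of_not_hasTwoVanishingOn h2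
  refine LinearIndepOn.mono ?_ (Finset.coe_subset.2 hJJ')
  refine linearIndependent_iff_card_le_finrank_span.2 ?_
  rw [Set.finrank, ← Set.image_eq_range]
  simp only [Finset.coe_sort_coe, Fintype.card_coe]
  omega

lemma not_linearIndepOn_coordOn_iff (Z : Submodule (ZMod 2) (ι → ZMod 2)) (J : Finset ι) :
    ¬ LinearIndepOn (ZMod 2) (coordOn Z) (J : Set ι) ↔
      ∃ K ⊆ J, K.Nonempty ∧ SumZeroOn Z K := by
  classical
  rw [linearIndepOn_finset_iff]
  push Not
  constructor
  · rintro ⟨f, hf, i, hi, hfi⟩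
    refine ⟨J.filter (f · = 1), Finset.filter_subset _ _, ⟨i, ?_⟩, fun z hz => ?_⟩
    · rcases ZMod.eq_zero_or_one_of_two (f i) with h | h <;> simp_all
    · have := LinearMap.congr_fun hf ⟨z, hz⟩
      simp only [LinearMap.coe_sum, Finset.sum_apply, LinearMap.smul_apply, coordOn] at this
      rw [Finset.sum_filter]
      refine Eq.trans (Finset.sum_congr rfl fun e _ => ?_) this
      rcases ZMod.eq_zero_or_one_of_two (f e) with h | h <;> simp [h]
  · rintro ⟨K, hK, ⟨i, hi⟩, hsum⟩
    refine ⟨fun e => if e ∈ K then 1 else 0, ?_, i, hK hi, by simp [hi]⟩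
    ext z
    have := hsum z.1 z.2
    simp only [LinearMap.coe_sum, Finset.sum_apply, LinearMap.smul_apply, coordOn]
    simpa [← Finset.sum_filter, Finset.filter_mem_eq_inter, Finset.inter_eq_right.2 hK] using this

/-- If two binary spaces have the same pairs of vanishing vectors, then short vectors orthogonal
to the first one are orthogonal to the second one. -/
lemma SumZeroOn.of_hasTwoVanishingOn_iff [Finite ι] {Z₁ Z₂ : Submodule (ZMod 2) (ι → ZMod 2)}
    (h : ∀ J, HasTwoVanishingOn Z₁ J ↔ HasTwoVanishingOn Z₂ J)
    (hr : Module.finrank (ZMod 2) Z₁ = Module.finrank (ZMod 2) Z₂) (K : Finset ι)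
    (hK : K.card + 1 ≤ Module.finrank (ZMod 2) Z₁) (hsum : SumZeroOn Z₁ K) :
    SumZeroOn Z₂ K := by
  classical
  induction K using Finset.strongInduction with
  | H K ih =>
    rcases K.eq_empty_or_nonempty with rfl | hne
    · simp [SumZeroOn]
    have step₁₂ : ∀ J ⊆ K, J.Nonempty → SumZeroOn Z₁ J →
        ∃ L ⊆ J, L.Nonempty ∧ SumZeroOn Z₂ L := fun J hJ hJne hs => by
      rw [← not_linearIndepOn_coordOn_iff]
      intro hlin
      have hc := Finset.card_le_card hJ
      exact (not_linearIndepOn_coordOn_iff _ _).2 ⟨J, subset_rfl, hJne, hs⟩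
        (linearIndepOn_coordOn_of_hasTwoVanishingOn_iff (fun J => (h J).symm) hr.symm
          (by omega) hlin)
    have step₂₁ : ∀ J ⊆ K, J.Nonempty → SumZeroOn Z₂ J →
        ∃ L ⊆ J, L.Nonempty ∧ SumZeroOn Z₁ L := fun J hJ hJne hs => by
      rw [← not_linearIndepOn_coordOn_iff]
      intro hlin
      have hc := Finset.card_le_card hJ
      exact (not_linearIndepOn_coordOn_iff _ _).2 ⟨J, subset_rfl, hJne, hs⟩
        (linearIndepOn_coordOn_of_hasTwoVanishingOn_iff h hr (by omega) hlin)
    obtain ⟨L₀, hL₀⟩ := step₁₂ K subset_rfl hne hsum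
    obtain ⟨L, -, hLmin⟩ := exists_minimal_le_of_wellFoundedLT
      (fun L : Finset ι => L ⊆ K ∧ L.Nonempty ∧ SumZeroOn Z₂ L) L₀ hL₀
    obtain ⟨⟨hLK, hLne, hL2⟩, hmin⟩ := hLmin
    obtain ⟨A, hAL, hAne, hA1⟩ := step₂₁ L hLK hLne hL2
    obtain ⟨B, hBA, hBne, hB2⟩ := step₁₂ A (hAL.trans hLK) hAne hA1
    have hLB : L ⊆ B := hmin ⟨hBA.trans (hAL.trans hLK), hBne, hB2⟩ (hBA.trans hAL)
    obtain rfl : A = L := hAL.antisymm (hLB.trans hBA)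
    have hrest : SumZeroOn Z₁ (K \ A) := fun z hz => by
      have := Finset.sum_sdiff (f := z) hLK
      rwa [hA1 z hz, add_zero, hsum z hz] at this
    have hlt : K \ A ⊂ K := Finset.sdiff_ssubset hLK hLne
    have hfin := ih (K \ A) hlt (by have := Finset.card_lt_card hlt; omega) hrest
    intro z hz
    rw [← Finset.sum_sdiff hLK, hfin z hz, hL2 z hz, add_zero]

end CoordinateFunctionals

section Boundary

variable {V ι : Type*} [DecidableEq V]

/-- The number of ends of `s` that are equal to `v`. -/
def Sym2.endCount (s : Sym2 V) (v : V) : ℕ :=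
  if s = s(v, v) then 2 else if v ∈ s then 1 else 0

lemma Sym2.endCount_mk (a b v : V) :
    s(a, b).endCount v = (if a = v then 1 else 0) + if b = v then 1 else 0 := by
  simp only [Sym2.endCount, Sym2.eq_iff, Sym2.mem_iff]
  by_cases ha : a = v <;> by_cases hb : b = v <;> simp [ha, hb, eq_comm]

lemma Sym2.sum_endCount {U : Finset V} {s : Sym2 V} (h : ∀ v ∈ s, v ∈ U) :
    ∑ v ∈ U, s.endCount v = 2 := by
  induction s with
  | _ a b =>
    have ha : a ∈ U := h a (by simp)
    have hb : b ∈ U := h b (by simp)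
    simp [Sym2.endCount_mk, Finset.sum_add_distrib, ha, hb]

lemma Sym2.endCount_map {W : Type*} [DecidableEq W] [Fintype V] (p : V → W) (s : Sym2 V) (w : W) :
    (s.map p).endCount w = ∑ v with p v = w, s.endCount v := by
  induction s with
  | _ a b =>
    simp [Sym2.endCount_mk, Finset.sum_add_distrib]

lemma Sym2.endCount_eq_zero_of_notMem {s : Sym2 V} {v : V} (h : v ∉ s) : s.endCount v = 0 := by
  induction s with
  | _ a b =>
    simp only [Sym2.mem_iff, not_or] at h
    simp [Sym2.endCount_mk, Ne.symm h.1, Ne.symm h.2]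

variable [Fintype ι]

/-- The binary boundary map of the multigraph with end function `ends`. -/
def boundary (ends : ι → Sym2 V) : (ι → ZMod 2) →ₗ[ZMod 2] (V → ZMod 2) where
  toFun z v := ∑ e, z e * ((ends e).endCount v : ZMod 2)
  map_add' x y := by ext v; simp [add_mul, Finset.sum_add_distrib]
  map_smul' c x := by ext v; simp [Finset.mul_sum, mul_assoc]

lemma boundary_apply (ends : ι → Sym2 V) (z : ι → ZMod 2) (v : V) :
    boundary ends z v = ∑ e, z e * ((ends e).endCount v : ZMod 2) := rfl

lemma sum_boundary {ends : ι → Sym2 V} {U : Finset V} (hU : ∀ e, ∀ v ∈ ends e, v ∈ U)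
    (z : ι → ZMod 2) : ∑ v ∈ U, boundary ends z v = 0 := by
  simp only [boundary_apply]
  rw [Finset.sum_comm]
  refine Finset.sum_eq_zero fun e _ => ?_
  rw [← Finset.mul_sum, ← Nat.cast_sum, Sym2.sum_endCount (hU e)]
  exact mul_eq_zero_of_right _ (by decide)

lemma sum_boundary_fiber [Fintype V] {W : Type*} [DecidableEq W] (ends : ι → Sym2 V) (p : V → W)
    (z : ι → ZMod 2) (w : W) :
    ∑ v with p v = w, boundary ends z v = boundary (fun e => (ends e).map p) z w := by
  simp only [boundary_apply, Sym2.endCount_map, Nat.cast_sum, Finset.mul_sum]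
  rw [Finset.sum_comm]

/-- The cycle space of a graph with edge set `ι` and vertices in `U` has dimension at least
`|ι| - |U| + 1`. -/
lemma card_add_one_le_card_add_finrank_ker_boundary {ends : ι → Sym2 V} {U : Finset V}
    (hU : ∀ e, ∀ v ∈ ends e, v ∈ U) (hne : U.Nonempty) :
    Fintype.card ι + 1 ≤ U.card + Module.finrank (ZMod 2) (LinearMap.ker (boundary ends)) := by
  let B := (LinearMap.funLeft (ZMod 2) (ZMod 2) (Subtype.val : U → V)).comp (boundary ends)
  let s : (U → ZMod 2) →ₗ[ZMod 2] ZMod 2 := ∑ u, LinearMap.proj u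
  have hs : ∀ f, s f = ∑ u, f u := fun f => by simp [s]
  have hker : LinearMap.ker B = LinearMap.ker (boundary ends) := by
    ext z
    simp only [LinearMap.mem_ker]
    constructor
    · intro hz
      ext v
      by_cases hv : v ∈ U
      · exact congrFun hz ⟨v, hv⟩
      · rw [boundary_apply]
        refine Finset.sum_eq_zero fun e _ => ?_
        simp [Sym2.endCount_eq_zero_of_notMem fun h => hv (hU e v h)]
    · intro hz
      simp [B, hz]
  have hrange : LinearMap.range B ≤ LinearMap.ker s := by
    rintro _ ⟨z, rfl⟩
    rw [LinearMap.mem_ker, hs, ← sum_boundary hU z, ← Finset.sum_coe_sort U]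
    rfl
  have hsurj : LinearMap.range s = ⊤ := by
    obtain ⟨u, hu⟩ := hne
    refine LinearMap.range_eq_top.2 fun c => ⟨Pi.single ⟨u, hu⟩ c, ?_⟩
    rw [hs, Finset.sum_pi_single']
    simp
  have h1 := LinearMap.finrank_range_add_finrank_ker B
  have h2 := LinearMap.finrank_range_add_finrank_ker s
  have h3 := Submodule.finrank_mono hrange
  rw [hsurj, finrank_top, Module.finrank_self, Module.finrank_fintype_fun_eq_card,
    Fintype.card_coe] at h2
  rw [hker, Module.finrank_fintype_fun_eq_card] at h1
  omega

/-- A vector whose sum over each component of the subgraph `D` vanishes is the boundary of a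
vector supported on `D`. -/
lemma exists_boundary_eq_of_sum_fiber_eq_zero [Fintype V] (ends : ι → Sym2 V) (D : Set ι)
    (r : V → V → Prop) (hr : ∀ u v, r u v → ∃ e ∈ D, ends e = s(u, v)) [DecidableEq (Quot r)]
    [Fintype (Quot r)]
    (b : V → ZMod 2) (hb : ∀ q, ∑ v with Quot.mk r v = q, b v = 0) :
    ∃ y : ι → ZMod 2, (∀ e ∉ D, y e = 0) ∧ boundary ends y = b := by
  classical
  let S : Submodule (ZMod 2) (V → ZMod 2) :=
    (⨅ e ∈ Dᶜ, LinearMap.ker (LinearMap.proj (R := ZMod 2) (φ := fun _ : ι => ZMod 2) e)).map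
      (boundary ends)
  have two : ∀ x : V → ZMod 2, x + x = 0 := fun x => by
    ext; exact CharTwo.add_self_eq_zero _
  have hpair : ∀ u v, Relation.EqvGen r u v →
      (Pi.single u 1 + Pi.single v 1 : V → ZMod 2) ∈ S := by
    intro u v h
    induction h with
    | rel u v h =>
      obtain ⟨e, he, hends⟩ := hr u v h
      refine ⟨Pi.single e 1, ?_, ?_⟩
      · simp only [SetLike.mem_coe, Submodule.mem_iInf, LinearMap.mem_ker, LinearMap.proj_apply]
        intro f hf
        exact Pi.single_eq_of_ne (by rintro rfl; exact hf he) _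
      · ext w
        simp only [boundary_apply, Pi.single_apply, ite_mul, one_mul, zero_mul,
          Finset.sum_ite_eq', Finset.mem_univ, if_true, hends, Sym2.endCount_mk, Pi.add_apply]
        simp [eq_comm]
    | refl u => rw [two]; exact S.zero_mem
    | symm u v _ ih => rwa [add_comm]
    | trans u v w _ _ ih₁ ih₂ =>
      have := S.add_mem ih₁ ih₂
      rwa [add_assoc, ← add_assoc (Pi.single v 1), two, zero_add] at this
  have hmem : b ∈ S := by
    have h1 : ∑ v, b v • (Pi.single v 1 + Pi.single (Quot.mk r v).out 1 : V → ZMod 2) ∈ S :=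
      S.sum_mem fun v _ => S.smul_mem _ <| hpair _ _ <|
        Quot.eqvGen_exact (Quot.out_eq _).symm
    have h2 : ∑ v, b v • (Pi.single (Quot.mk r v).out 1 : V → ZMod 2) = 0 := by
      rw [← Finset.sum_fiberwise (g := Quot.mk r)]
      refine Finset.sum_eq_zero fun q _ => ?_
      have : ∑ v with Quot.mk r v = q, b v • (Pi.single (Quot.mk r v).out 1 : V → ZMod 2) =
          ∑ v with Quot.mk r v = q, b v • (Pi.single q.out 1 : V → ZMod 2) :=
        Finset.sum_congr rfl fun v hv => by rw [(Finset.mem_filter.1 hv).2]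
      rw [this, ← Finset.sum_smul, hb, zero_smul]
    simp only [smul_add, Finset.sum_add_distrib, h2, add_zero] at h1
    convert h1
    ext w
    simp [Finset.sum_apply, Pi.single_apply]
  obtain ⟨y, hy, hyb⟩ := hmem
  simp only [SetLike.mem_coe, Submodule.mem_iInf, LinearMap.mem_ker, LinearMap.proj_apply] at hy
  exact ⟨y, hy, hyb⟩

end Boundary

section IndicatorOn

variable {α : Type*} [DecidableEq α]

/-- The indicator vector of `X`, as a vector indexed by `E`. -/
def indicatorOn (E X : Finset α) : E → ZMod 2 := fun e => if e.1 ∈ X then 1 else 0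

lemma exists_eq_indicatorOn {E : Finset α} (z : E → ZMod 2) : ∃ X ⊆ E, z = indicatorOn E X := by
  refine ⟨(Finset.univ.filter (z · = 1)).map (Function.Embedding.subtype _), ?_, ?_⟩
  · intro e he
    simp only [Finset.mem_map, Finset.mem_filter] at he
    obtain ⟨f, -, rfl⟩ := he
    exact f.2
  · ext e
    rcases ZMod.eq_zero_or_one_of_two (z e) with h | h <;> simp [indicatorOn, h]

lemma indicatorOn_injOn {E X Y : Finset α} (hX : X ⊆ E) (hY : Y ⊆ E)
    (h : indicatorOn E X = indicatorOn E Y) : X = Y := by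
  have key : ∀ e (he : e ∈ E), e ∈ X ↔ e ∈ Y := by
    intro e he
    have := congrFun h ⟨e, he⟩
    by_cases h1 : e ∈ X <;> by_cases h2 : e ∈ Y <;> simp_all [indicatorOn]
  ext e
  exact ⟨fun he => (key e (hX he)).1 he, fun he => (key e (hY he)).2 he⟩

lemma indicatorOn_empty (E : Finset α) : indicatorOn E ∅ = 0 := by
  ext; simp [indicatorOn]

lemma indicatorOn_sdiff_add {E X Y : Finset α} (h : Y ⊆ X) :
    indicatorOn E (X \ Y) + indicatorOn E Y = indicatorOn E X := by
  ext e
  by_cases hY : e.1 ∈ Y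
  · simp [indicatorOn, hY, h hY]
  · simp [indicatorOn, hY]

end IndicatorOn

namespace MGraph

variable {V : Type} {α : Type} [DecidableEq V] {G : MGraph V α}

/-- Every vertex has even degree in the edge set `X`. -/
def EvenSet (G : MGraph V α) (X : Finset α) : Prop := ∀ v, Even (G.degIn X v)

lemma degIn_eq_sum_endCount (X : Finset α) (v : V) :
    G.degIn X v = ∑ e ∈ X, (G.ends e).endCount v := rfl

lemma _root_.Sym2.endCount_pos_iff {s : Sym2 V} {v : V} : 0 < s.endCount v ↔ v ∈ s := by
  refine ⟨fun h => by_contra fun hv => ?_, fun h => ?_⟩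
  · rw [Sym2.endCount_eq_zero_of_notMem hv] at h
    exact h.ne rfl
  · unfold Sym2.endCount
    split_ifs <;> simp

lemma degIn_pos_iff {X : Finset α} {v : V} : 0 < G.degIn X v ↔ G.VIn X v := by
  rw [degIn_eq_sum_endCount, Finset.sum_pos_iff]
  simp only [Sym2.endCount_pos_iff]
  rfl

lemma twoCycles_iff_exists_liftCircuit {X : Finset α} (hX : X ⊆ G.E) :
    G.TwoCycles X ↔ ∃ Y ⊆ X, G.LiftCircuit Y := by
  constructor
  · intro h
    obtain ⟨Y, hYX, hY, hmin⟩ := exists_minimal_le_of_wellFoundedLT G.TwoCycles X h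
    exact ⟨Y, hYX, hYX.trans hX, hY, fun Z hZ hZ2 => hZ.2 (hmin hZ2 hZ.1)⟩
  · rintro ⟨Y, hYX, -, ⟨A, B, hA, hB, hAY, hBY, hne⟩, -⟩
    exact ⟨A, B, hA, hB, hAY.trans hYX, hBY.trans hYX, hne⟩

lemma IsCycle.evenSet {C : Finset α} (h : G.IsCycle C) : G.EvenSet C := fun v => by
  by_cases hv : G.VIn C v
  · rw [h.2.2.1 v hv]; exact even_two
  · rw [← degIn_pos_iff, Nat.pos_iff_ne_zero, not_not] at hv
    rw [hv]; exact Even.zero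

variable [DecidableEq α]

lemma degIn_sdiff_add {X Y : Finset α} (h : Y ⊆ X) (v : V) :
    G.degIn (X \ Y) v + G.degIn Y v = G.degIn X v :=
  Finset.sum_sdiff h

lemma EvenSet.sdiff {X Y : Finset α} (hX : G.EvenSet X) (hY : G.EvenSet Y) (h : Y ⊆ X) :
    G.EvenSet (X \ Y) := fun v => by
  have h1 := hX v
  rw [← degIn_sdiff_add h, Nat.even_add] at h1
  exact h1.2 (hY v)

lemma IsCycle.subset_of_evenSet {C X : Finset α} (h : G.IsCycle C) (hX : G.EvenSet X)
    (hne : X.Nonempty) (hXC : X ⊆ C) : C ⊆ X := by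
  obtain ⟨-, -, hdeg, hconn⟩ := h
  have hall : ∀ v, G.VIn X v → ∀ e ∈ C, v ∈ G.ends e → e ∈ X := by
    intro v hv e he hve
    by_contra heX
    have h1 := degIn_pos_iff.2 hv
    have h2 : 0 < G.degIn (C \ X) v := degIn_pos_iff.2 ⟨e, Finset.mem_sdiff.2 ⟨he, heX⟩, hve⟩
    have h3 := degIn_sdiff_add (G := G) hXC v
    have h4 := hdeg v ⟨e, he, hve⟩
    obtain ⟨k, hk⟩ := hX v
    omega
  obtain ⟨e₀, he₀⟩ := hne
  intro e he
  induction hs : G.ends e₀ with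
  | _ a b =>
    induction ht : G.ends e with
    | _ c d =>
      have ha : G.VIn X a := ⟨e₀, he₀, by simp [hs]⟩
      have hreach := hconn a c ⟨e₀, hXC he₀, by simp [hs]⟩ ⟨e, he, by simp [ht]⟩
      have hc : G.VIn X c := by
        clear ht
        induction hreach with
        | refl => exact ha
        | tail _ hstep ih =>
          obtain ⟨f, hf, hends⟩ := hstep
          exact ⟨f, hall _ ih f hf (by simp [hends]), by simp [hends]⟩
      exact hall c hc e he (by simp [ht])

/-- The space of even edge sets of `G` contained in `E`. -/
def cycleSpace (G : MGraph V α) (E : Finset α) : Submodule (ZMod 2) (E → ZMod 2) :=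
  LinearMap.ker (boundary fun e : E => G.ends e)

lemma indicatorOn_mem_cycleSpace {E X : Finset α} (hX : X ⊆ E) :
    indicatorOn E X ∈ G.cycleSpace E ↔ G.EvenSet X := by
  rw [cycleSpace, LinearMap.mem_ker, funext_iff]
  refine forall_congr' fun v => ?_
  rw [← ZMod.natCast_eq_zero_iff_even, degIn_eq_sum_endCount, boundary_apply,
    Pi.zero_apply]
  simp only [indicatorOn, ite_mul, one_mul, zero_mul]
  rw [Finset.sum_coe_sort E fun e => if e ∈ X then ((G.ends e).endCount v : ZMod 2) else 0,
    ← Finset.sum_filter, Finset.filter_mem_eq_inter, Finset.inter_eq_right.2 hX, Nat.cast_sum]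

lemma isCycle_of_minimal_evenSet {C : Finset α} (hC : C ⊆ G.E)
    (h : Minimal (fun X : Finset α => X.Nonempty ∧ G.EvenSet X) C) : G.IsCycle C := by
  obtain ⟨⟨hne, heven⟩, hmin⟩ := h
  refine ⟨hne, hC, ?_, ?_⟩
  · let U : Finset V := C.biUnion fun e => (G.ends e).toFinset
    have hU : ∀ v, v ∈ U ↔ G.VIn C v := fun v => by simp [U, VIn]
    have hUne : U.Nonempty := by
      obtain ⟨e, he⟩ := hne
      induction hs : G.ends e with
      | _ a b => exact ⟨a, (hU a).2 ⟨e, he, by simp [hs]⟩⟩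
    have hends : ∀ e : C, ∀ v ∈ G.ends e, v ∈ U := fun e v hv => (hU v).2 ⟨e, e.2, hv⟩
    have h1 := card_add_one_le_card_add_finrank_ker_boundary hends hUne
    have h2 : Module.finrank (ZMod 2) (G.cycleSpace C) ≤ 1 := by
      refine finrank_le_one ⟨indicatorOn C C, (indicatorOn_mem_cycleSpace subset_rfl).2 heven⟩ ?_
      rintro ⟨z, hz⟩
      obtain ⟨X, hXC, rfl⟩ := exists_eq_indicatorOn z
      rcases X.eq_empty_or_nonempty with rfl | hX
      · exact ⟨0, Subtype.ext (by simp [indicatorOn_empty])⟩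
      · have : C ⊆ X := hmin ⟨hX, (indicatorOn_mem_cycleSpace hXC).1 hz⟩ hXC
        obtain rfl := hXC.antisymm this
        exact ⟨1, Subtype.ext (by simp)⟩
    change _ ≤ _ + Module.finrank (ZMod 2) (G.cycleSpace C) at h1
    rw [Fintype.card_coe] at h1
    have hge : ∀ v ∈ U, 2 ≤ G.degIn C v := fun v hv => by
      have := degIn_pos_iff.2 ((hU v).1 hv)
      obtain ⟨k, hk⟩ := heven v
      omega
    have hsum : ∑ v ∈ U, G.degIn C v = 2 * C.card := by
      simp only [degIn_eq_sum_endCount]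
      rw [Finset.sum_comm, Finset.sum_congr rfl fun e he => Sym2.sum_endCount (hends ⟨e, he⟩)]
      simp [mul_comm]
    have hsum2 : ∑ v ∈ U, 2 = ∑ v ∈ U, G.degIn C v := by
      refine (Finset.sum_le_sum hge).antisymm ?_
      rw [hsum, Finset.sum_const, smul_eq_mul]
      omega
    intro v hv
    exact ((Finset.sum_eq_sum_iff_of_le hge).1 hsum2 v ((hU v).2 hv)).symm
  · classical
    intro u v hu hv
    let X := C.filter fun e => ∃ w ∈ G.ends e, Relation.ReflTransGen (G.Adj C) u w
    have hclosed : ∀ e ∈ C, ∀ x ∈ G.ends e, ∀ y ∈ G.ends e,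
        Relation.ReflTransGen (G.Adj C) u x → Relation.ReflTransGen (G.Adj C) u y := by
      intro e he x hx y hy hux
      induction hs : G.ends e with
      | _ a b =>
        have hab : G.Adj C a b := ⟨e, he, hs⟩
        have hba : G.Adj C b a := ⟨e, he, by rw [hs, Sym2.eq_swap]⟩
        rw [hs, Sym2.mem_iff] at hx hy
        rcases hx with rfl | rfl <;> rcases hy with rfl | rfl
        exacts [hux, hux.tail hab, hux.tail hba, hux]
    have hXC : X ⊆ C := Finset.filter_subset _ _
    have hXe : G.EvenSet X := by
      intro w
      by_cases hw : Relation.ReflTransGen (G.Adj C) u w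
      · have : G.degIn (C \ X) w = 0 := by
          by_contra h0
          obtain ⟨e, he, hwe⟩ := degIn_pos_iff.1 (Nat.pos_of_ne_zero h0)
          rw [Finset.mem_sdiff] at he
          exact he.2 (Finset.mem_filter.2 ⟨he.1, w, hwe, hw⟩)
        have h2 := degIn_sdiff_add (G := G) hXC w
        rw [this, zero_add] at h2
        rw [h2]
        exact heven w
      · have : G.degIn X w = 0 := by
          by_contra h0
          obtain ⟨e, he, hwe⟩ := degIn_pos_iff.1 (Nat.pos_of_ne_zero h0)
          obtain ⟨heC, x, hx, hux⟩ := Finset.mem_filter.1 he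
          exact hw (hclosed e heC x hx w hwe hux)
        rw [this]
        exact Even.zero
    have hXne : X.Nonempty := by
      obtain ⟨e, he, hue⟩ := hu
      exact ⟨e, Finset.mem_filter.2 ⟨he, u, hue, .refl⟩⟩
    have hCX : C ⊆ X := hmin ⟨hXne, hXe⟩ hXC
    obtain ⟨e, he, hve⟩ := hv
    obtain ⟨-, x, hx, hux⟩ := Finset.mem_filter.1 (hCX he)
    exact hclosed e he x hx v hve hux

lemma isCycle_iff_minimal_evenSet {C : Finset α} :
    G.IsCycle C ↔ C ⊆ G.E ∧ Minimal (fun X : Finset α => X.Nonempty ∧ G.EvenSet X) C :=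
  ⟨fun h => ⟨h.2.1, ⟨h.1, h.evenSet⟩, fun _ hX hXC => h.subset_of_evenSet hX.2 hX.1 hXC⟩,
    fun h => isCycle_of_minimal_evenSet h.1 h.2⟩

lemma EvenSet.exists_isCycle_subset {X : Finset α} (h : G.EvenSet X) (hX : X ⊆ G.E)
    (hne : X.Nonempty) : ∃ C ⊆ X, G.IsCycle C := by
  obtain ⟨C, hCX, hC⟩ := exists_minimal_le_of_wellFoundedLT
    (fun X : Finset α => X.Nonempty ∧ G.EvenSet X) X ⟨hne, h⟩
  exact ⟨C, hCX, isCycle_of_minimal_evenSet (hCX.trans hX) hC⟩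

lemma twoCycles_iff_evenSet {X : Finset α} (hX : X ⊆ G.E) :
    G.TwoCycles X ↔ ∃ A ⊆ X, ∃ B ⊆ X, A.Nonempty ∧ B.Nonempty ∧ A ≠ B ∧
      G.EvenSet A ∧ G.EvenSet B := by
  constructor
  · rintro ⟨A, B, hA, hB, hAX, hBX, hne⟩
    exact ⟨A, hAX, B, hBX, hA.1, hB.1, hne, hA.evenSet, hB.evenSet⟩
  · rintro ⟨A, hAX, B, hBX, hAne, hBne, hne, hA, hB⟩
    by_contra hno
    have huniq : ∀ C D, G.IsCycle C → G.IsCycle D → C ⊆ X → D ⊆ X → C = D :=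
      fun C D hC hD hCX hDX => by_contra fun h => hno ⟨C, D, hC, hD, hCX, hDX, h⟩
    have hcyc : ∀ Y ⊆ X, Y.Nonempty → G.EvenSet Y → G.IsCycle Y := by
      intro Y hYX hYne hY
      obtain ⟨C, hCY, hC⟩ := hY.exists_isCycle_subset (hYX.trans hX) hYne
      rcases (Y \ C).eq_empty_or_nonempty with h0 | h0
      · rwa [hCY.antisymm (Finset.sdiff_eq_empty_iff_subset.1 h0)] at hC
      · obtain ⟨D, hD, hDc⟩ := (hY.sdiff hC.evenSet hCY).exists_isCycle_subset
          ((Finset.sdiff_subset.trans hYX).trans hX) h0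
        obtain rfl := huniq C D hC hDc (hCY.trans hYX) (hD.trans (Finset.sdiff_subset.trans hYX))
        obtain ⟨e, he⟩ := hC.1
        exact absurd he (Finset.mem_sdiff.1 (hD he)).2
    exact hne (huniq A B (hcyc A hAX hAne hA) (hcyc B hBX hBne hB) hAX hBX)

lemma hasTwoVanishingOn_cycleSpace_iff {E : Finset α} (hE : E = G.E) (J : Finset E) :
    HasTwoVanishingOn (G.cycleSpace E) J ↔
      G.TwoCycles (E \ J.map (Function.Embedding.subtype _)) := by
  have hsub : E \ J.map (Function.Embedding.subtype _) ⊆ G.E :=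
    Finset.sdiff_subset.trans hE.subset
  have hvan : ∀ X ⊆ E, (∀ e ∈ J, indicatorOn E X e = 0) ↔
      X ⊆ E \ J.map (Function.Embedding.subtype _) := by
    intro X hX
    simp only [indicatorOn, ite_eq_right_iff, one_ne_zero, imp_false]
    refine ⟨fun h e he => ?_, fun h e he heX => ?_⟩
    · rw [Finset.mem_sdiff]
      refine ⟨hX he, fun hm => ?_⟩
      obtain ⟨f, hf, rfl⟩ := Finset.mem_map.1 hm
      exact h f hf he
    · exact (Finset.mem_sdiff.1 (h heX)).2 (Finset.mem_map.2 ⟨e, he, rfl⟩)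
  rw [twoCycles_iff_evenSet hsub]
  constructor
  · rintro ⟨a, ha, b, hb, ha0, hb0, hab, hJ⟩
    obtain ⟨A, hA, rfl⟩ := exists_eq_indicatorOn a
    obtain ⟨B, hB, rfl⟩ := exists_eq_indicatorOn b
    refine ⟨A, (hvan A hA).1 fun e he => (hJ e he).1, B, (hvan B hB).1 fun e he => (hJ e he).2,
      ?_, ?_, ?_, (indicatorOn_mem_cycleSpace hA).1 ha, (indicatorOn_mem_cycleSpace hB).1 hb⟩
    · rw [Finset.nonempty_iff_ne_empty]; rintro rfl; exact ha0 (indicatorOn_empty _)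
    · rw [Finset.nonempty_iff_ne_empty]; rintro rfl; exact hb0 (indicatorOn_empty _)
    · rintro rfl; exact hab rfl
  · rintro ⟨A, hA, B, hB, hAne, hBne, hAB, hAe, hBe⟩
    have hAE := hA.trans Finset.sdiff_subset
    have hBE := hB.trans Finset.sdiff_subset
    refine ⟨_, (indicatorOn_mem_cycleSpace hAE).2 hAe, _, (indicatorOn_mem_cycleSpace hBE).2 hBe,
      ?_, ?_, fun h => hAB (indicatorOn_injOn hAE hBE h),
      fun e he => ⟨(hvan A hAE).2 hA e he, (hvan B hBE).2 hB e he⟩⟩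
    · rw [← indicatorOn_empty]
      exact fun h => hAne.ne_empty (indicatorOn_injOn hAE (Finset.empty_subset _) h)
    · rw [← indicatorOn_empty]
      exact fun h => hBne.ne_empty (indicatorOn_injOn hBE (Finset.empty_subset _) h)

lemma LiftEq.hasTwoVanishingOn_iff {V₂ : Type} [DecidableEq V₂] {H : MGraph V₂ α}
    (h : G.LiftEq H) (J : Finset G.E) :
    HasTwoVanishingOn (G.cycleSpace G.E) J ↔ HasTwoVanishingOn (H.cycleSpace G.E) J := by
  rw [hasTwoVanishingOn_cycleSpace_iff rfl, hasTwoVanishingOn_cycleSpace_iff h.1,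
    twoCycles_iff_exists_liftCircuit Finset.sdiff_subset,
    twoCycles_iff_exists_liftCircuit (Finset.sdiff_subset.trans h.1.subset)]
  simp only [h.2]

lemma twoIso_of_cycleSpace_eq {V₂ : Type} [DecidableEq V₂] {H : MGraph V₂ α} (hE : G.E = H.E)
    (h : G.cycleSpace G.E = H.cycleSpace G.E) : G.TwoIso H := by
  refine ⟨hE, fun X => ?_⟩
  have heven : ∀ Y ⊆ G.E, G.EvenSet Y ↔ H.EvenSet Y := fun Y hY => by
    rw [← indicatorOn_mem_cycleSpace hY, h, indicatorOn_mem_cycleSpace hY]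
  rw [isCycle_iff_minimal_evenSet, isCycle_iff_minimal_evenSet, ← hE]
  refine and_congr_right fun hX => ?_
  constructor
  · rintro ⟨⟨hne, he⟩, hmin⟩
    exact ⟨⟨hne, (heven X hX).1 he⟩, fun Y hY hYX =>
      hmin ⟨hY.1, (heven Y (Finset.Subset.trans hYX hX)).2 hY.2⟩ hYX⟩
  · rintro ⟨⟨hne, he⟩, hmin⟩
    exact ⟨⟨hne, (heven X hX).2 he⟩, fun Y hY hYX =>
      hmin ⟨hY.1, (heven Y (Finset.Subset.trans hYX hX)).1 hY.2⟩ hYX⟩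

/-- The cycle space is spanned by the cycles. -/
lemma cycleSpace_le_of_isCycle {S : Submodule (ZMod 2) (G.E → ZMod 2)}
    (hS : ∀ C, G.IsCycle C → indicatorOn G.E C ∈ S) : G.cycleSpace G.E ≤ S := by
  intro z hz
  obtain ⟨X, hX, rfl⟩ := exists_eq_indicatorOn z
  rw [indicatorOn_mem_cycleSpace hX] at hz
  induction X using Finset.strongInduction with
  | H X ih =>
    rcases X.eq_empty_or_nonempty with rfl | hne
    · rw [indicatorOn_empty]; exact S.zero_mem
    · obtain ⟨C, hCX, hC⟩ := hz.exists_isCycle_subset hX hne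
      rw [← indicatorOn_sdiff_add hCX]
      exact S.add_mem (ih _ (Finset.sdiff_ssubset hCX hC.1) (Finset.sdiff_subset.trans hX)
        (hz.sdiff hC.evenSet hCX)) (hS C hC)

lemma isCutEdge_iff_sumZeroOn (e : G.E) :
    G.IsCutEdge e ↔ SumZeroOn (G.cycleSpace G.E) {e} := by
  simp only [SumZeroOn, Finset.sum_singleton]
  constructor
  · intro h z hz
    have := cycleSpace_le_of_isCycle (G := G)
      (S := LinearMap.ker (LinearMap.proj (R := ZMod 2) (φ := fun _ : G.E => ZMod 2) e))
      (fun C hC => by simp [indicatorOn, h.2 C hC]) hz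
    simpa using this
  · refine fun h => ⟨e.2, fun C hC heC => ?_⟩
    have := h _ ((indicatorOn_mem_cycleSpace hC.2.1).2 hC.evenSet)
    simp [indicatorOn, heC] at this

lemma seriesPair_iff_sumZeroOn {e f : G.E} (hne : e ≠ f) :
    G.SeriesPair e f ↔ SumZeroOn (G.cycleSpace G.E) {e, f} := by
  simp only [SumZeroOn, Finset.sum_pair hne, CharTwo.add_eq_zero]
  constructor
  · intro h z hz
    have := cycleSpace_le_of_isCycle (G := G)
      (S := LinearMap.eqLocus
        (LinearMap.proj (R := ZMod 2) (φ := fun _ : G.E => ZMod 2) e) (LinearMap.proj f))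
      (fun C hC => by simp [LinearMap.mem_eqLocus, indicatorOn, h.2.2 C hC]) hz
    simpa using this
  · refine fun h => ⟨e.2, f.2, fun C hC => ?_⟩
    have := h _ ((indicatorOn_mem_cycleSpace hC.2.1).2 hC.evenSet)
    by_cases h1 : e.1 ∈ C <;> by_cases h2 : f.1 ∈ C <;> simp_all [indicatorOn]

end MGraph

section Cosimplification

namespace MGraph

/-- The end function of the graph obtained from `G` by contracting the edges in `D`. -/
def quotEnds {V α : Type} (G : MGraph V α) (D : Finset α) (e : G.E) :
    Sym2 (Quot (G.Adj D)) :=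
  (G.ends e).map (Quot.mk _)

open scoped Classical in
/-- The non-loop edges at the vertex `q` of the graph obtained from `G` by contracting `D`. -/
noncomputable def quotStar {V α : Type} (G : MGraph V α) (D : Finset α) (q : Quot (G.Adj D)) :
    Finset G.E :=
  Finset.univ.filter fun e => ((G.quotEnds D e).endCount q : ZMod 2) = 1

variable {V : Type} {α : Type} {G : MGraph V α} {D : Finset α}

open scoped Classical in
lemma sum_quotStar (q : Quot (G.Adj D)) (z : G.E → ZMod 2) :
    ∑ e ∈ G.quotStar D q, z e = boundary (G.quotEnds D) z q := by
  rw [boundary_apply, quotStar, Finset.sum_filter]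
  refine Finset.sum_congr rfl fun e _ => ?_
  rcases ZMod.eq_zero_or_one_of_two ((G.quotEnds D e).endCount q : ZMod 2) with h | h <;> simp [h]

open scoped Classical in
lemma natCast_endCount_quotEnds_of_mem {e : G.E} (he : e.1 ∈ D) (q : Quot (G.Adj D)) :
    ((G.quotEnds D e).endCount q : ZMod 2) = 0 := by
  induction hs : G.ends e with
  | _ a b =>
    have hab : Quot.mk (G.Adj D) a = Quot.mk (G.Adj D) b := Quot.sound ⟨e, he, hs⟩
    rw [quotEnds, hs, Sym2.map_mk, Sym2.endCount_mk, hab, Nat.cast_add]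
    exact CharTwo.add_self_eq_zero _

lemma notMem_of_mem_quotStar {e : G.E} {q : Quot (G.Adj D)} (he : e ∈ G.quotStar D q) :
    e.1 ∉ D := fun hD => by
  classical
  have h := (Finset.mem_filter.1 he).2
  rw [natCast_endCount_quotEnds_of_mem hD] at h
  exact zero_ne_one h

lemma Connected.finite (h : G.Connected) : Finite V := by
  classical
  rcases subsingleton_or_nontrivial V with hV | hV
  · infer_instance
  refine Set.finite_univ_iff.1
    ((Finset.finite_toSet (G.E.biUnion fun e => (G.ends e).toFinset)).subset fun v _ => ?_)
  obtain ⟨u, hu⟩ := exists_ne v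
  rcases (Relation.ReflTransGen.cases_head (h v u)) with h' | ⟨w, ⟨e, he, hends⟩, -⟩
  · exact absurd h'.symm hu
  · simp only [Finset.coe_biUnion, Set.mem_iUnion]
    exact ⟨e, he, by simp [hends]⟩

lemma quotStar_nonempty [Nontrivial (Quot (G.Adj D))] (h : G.Connected) (q : Quot (G.Adj D)) :
    (G.quotStar D q).Nonempty := by
  classical
  by_contra hempty
  rw [Finset.not_nonempty_iff_eq_empty, quotStar, Finset.filter_eq_empty_iff] at hempty
  obtain ⟨q', hq'⟩ := exists_ne q
  induction q using Quot.ind with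
  | mk u =>
  induction q' using Quot.ind with
  | mk v =>
  refine hq' ?_
  have hreach := h u v
  clear hq'
  induction hreach with
  | refl => rfl
  | @tail x y _ hstep ih =>
    obtain ⟨e, he, hends⟩ := hstep
    have h1 := hempty (Finset.mem_univ ⟨e, he⟩)
    simp only [quotEnds, hends, Sym2.map_mk, Sym2.endCount_mk, ih, if_true] at h1
    by_contra hne
    simp [hne] at h1

lemma sumZeroOn_quotStar [DecidableEq V] [Finite V] (q : Quot (G.Adj D)) :
    SumZeroOn (G.cycleSpace G.E) (G.quotStar D q) := fun z hz => by
  classical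
  have := Fintype.ofFinite V
  rw [sum_quotStar]
  refine (sum_boundary_fiber (fun e : G.E => G.ends e) (Quot.mk (G.Adj D)) z q).symm.trans ?_
  rw [cycleSpace, LinearMap.mem_ker] at hz
  exact Finset.sum_eq_zero fun v _ => congrFun hz v

/-- Vectors that are even in the contraction of `D` extend to the cycle space of `G` by changing
only coordinates in `D`. -/
lemma exists_mem_cycleSpace_eq_off [DecidableEq V] [Finite V] (hD : D ⊆ G.E) {z : G.E → ZMod 2}
    (hz : ∀ q : Quot (G.Adj D), ∑ e ∈ G.quotStar D q, z e = 0) :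
    ∃ y ∈ G.cycleSpace G.E, ∀ e : G.E, e.1 ∉ D → y e = z e := by
  classical
  have := Fintype.ofFinite V
  have := Fintype.ofFinite (Quot (G.Adj D))
  obtain ⟨y, hy, hyz⟩ := exists_boundary_eq_of_sum_fiber_eq_zero (fun e : G.E => G.ends e)
    {e | e.1 ∈ D} (G.Adj D)
    (fun u v ⟨e, he, hends⟩ => ⟨⟨e, hD he⟩, he, hends⟩)
    (boundary (fun e : G.E => G.ends e) z) fun q =>
       (sum_boundary_fiber _ (Quot.mk (G.Adj D)) z q).trans
        ((sum_quotStar q z).symm.trans (hz q))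
  refine ⟨z + y, ?_, fun e he => by simp [hy e he]⟩
  rw [cycleSpace, LinearMap.mem_ker, map_add, hyz]
  ext v
  exact CharTwo.add_self_eq_zero _

variable [DecidableEq α]

lemma sum_card_quotStar_le [Fintype (Quot (G.Adj D))] :
    ∑ q, (G.quotStar D q).card ≤ 2 * (G.E \ D).card := by
  classical
  have hcard : (Finset.univ.filter fun e : G.E => e.1 ∉ D).card = (G.E \ D).card := by
    rw [← Finset.card_map (Function.Embedding.subtype _)]
    congr 1
    ext e
    simp [and_comm]
  have hle : ∀ q, (G.quotStar D q).card ≤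
      ∑ e : G.E with e.1 ∉ D, (G.quotEnds D e).endCount q := fun q => by
    rw [Finset.card_eq_sum_ones]
    refine (Finset.sum_le_sum (g := fun e => (G.quotEnds D e).endCount q) fun e he => ?_).trans
      (Finset.sum_le_sum_of_subset fun e he => ?_)
    · have h := (Finset.mem_filter.1 he).2
      rw [Nat.one_le_iff_ne_zero]
      intro h0
      rw [h0, Nat.cast_zero] at h
      exact zero_ne_one h
    · exact Finset.mem_filter.2 ⟨Finset.mem_univ _, notMem_of_mem_quotStar he⟩
  refine (Finset.sum_le_sum fun q _ => hle q).trans ?_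
  rw [Finset.sum_comm, ← hcard, Finset.sum_congr rfl fun e _ =>
    Sym2.sum_endCount (U := Finset.univ) (s := G.quotEnds D e) fun v _ => Finset.mem_univ v]
  simp [mul_comm]

variable [DecidableEq V]

lemma IsCoContractSet.card_sdiff_eq_one_of_notCutEdge (hD : G.IsCoContractSet D) {e : α}
    (he : e ∈ G.E) (hcut : ¬ G.IsCutEdge e) :
    ∃ X : Finset α, (∀ f, f ∈ X ↔ G.SeriesPair e f) ∧ (X \ D).card = 1 := by
  classical
  have hmem : ∀ f, f ∈ G.E.filter (G.SeriesPair e) ↔ G.SeriesPair e f := fun f => by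
    rw [Finset.mem_filter]
    exact ⟨fun h => h.2, fun h => ⟨h.2.1, h⟩⟩
  have hself : G.SeriesPair e e := ⟨he, he, fun _ _ => Iff.rfl⟩
  refine ⟨_, hmem, hD.2.2 _ ⟨Finset.filter_subset _ _, ⟨e, (hmem e).2 hself⟩, ?_, ?_⟩
    ⟨e, (hmem e).2 hself, hcut⟩⟩
  · intro f hf g hg
    rw [hmem] at hf hg
    exact ⟨hf.2.1, hg.2.1, fun C hC => (hf.2.2 C hC).symm.trans (hg.2.2 C hC)⟩
  · exact fun g _ h => (hmem g).2 (h e ((hmem e).2 hself))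

lemma IsCoContractSet.three_le_card (hD : G.IsCoContractSet D) {K : Finset G.E}
    (hne : K.Nonempty) (hKD : ∀ e ∈ K, e.1 ∉ D) (hK : SumZeroOn (G.cycleSpace G.E) K) :
    3 ≤ K.card := by
  have hcut : ∀ e ∈ K, ¬ G.IsCutEdge e := fun e he h => hKD e he (hD.2.1 e h)
  have h0 := hne.card_pos
  by_contra! hlt
  obtain h1 | h2 : K.card = 1 ∨ K.card = 2 := by omega
  · obtain ⟨e, rfl⟩ := Finset.card_eq_one.1 h1
    exact hcut e (by simp) ((isCutEdge_iff_sumZeroOn e).2 hK)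
  · obtain ⟨e, f, hef, rfl⟩ := Finset.card_eq_two.1 h2
    obtain ⟨X, hX, hcard⟩ := hD.card_sdiff_eq_one_of_notCutEdge e.2 (hcut e (by simp))
    have he : e.1 ∈ X \ D := Finset.mem_sdiff.2
      ⟨(hX _).2 ⟨e.2, e.2, fun _ _ => Iff.rfl⟩, hKD e (by simp)⟩
    have hf : f.1 ∈ X \ D := Finset.mem_sdiff.2
      ⟨(hX _).2 ((seriesPair_iff_sumZeroOn hef).2 hK), hKD f (by simp)⟩
    exact hef (Subtype.ext (Finset.card_le_one.1 hcard.le _ he _ hf))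

lemma card_sdiff_add_one_le [Finite V] [Fintype (Quot (G.Adj D))] [Nonempty (Quot (G.Adj D))]
    (hD : D ⊆ G.E) :
    (G.E \ D).card + 1 ≤
      Fintype.card (Quot (G.Adj D)) + Module.finrank (ZMod 2) (G.cycleSpace G.E) := by
  classical
  let ι := {e : G.E // e.1 ∉ D}
  have hcard : Fintype.card ι = (G.E \ D).card := by
    rw [Fintype.card_subtype, ← Finset.card_map (Function.Embedding.subtype _)]
    congr 1
    ext e
    simp [and_comm]
  have h1 := card_add_one_le_card_add_finrank_ker_boundary
    (ends := fun e : ι => G.quotEnds D e.1) (U := Finset.univ) (fun _ v _ => Finset.mem_univ v)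
    Finset.univ_nonempty
  rw [hcard, Finset.card_univ] at h1
  refine h1.trans (Nat.add_le_add_left ?_ _)
  let ρ : G.cycleSpace G.E →ₗ[ZMod 2] (ι → ZMod 2) :=
    (LinearMap.funLeft (ZMod 2) (ZMod 2) (Subtype.val : ι → G.E)).comp (G.cycleSpace G.E).subtype
  refine (Submodule.finrank_mono (t := LinearMap.range ρ) fun z hz => ?_).trans
    (LinearMap.finrank_range_le ρ)
  obtain ⟨y, hy, hyz⟩ := exists_mem_cycleSpace_eq_off hD
    (z := fun e => if h : e.1 ∉ D then z ⟨e, h⟩ else 0) fun q => by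
      have h0 := congrFun (LinearMap.mem_ker.1 hz) q
      rw [boundary_apply] at h0
      rw [sum_quotStar, boundary_apply]
      refine Eq.trans (Finset.sum_of_injOn Subtype.val Subtype.val_injective.injOn
        (fun _ _ => Finset.mem_coe.2 (Finset.mem_univ _)) ?_ ?_).symm h0
      · intro e _ he
        have : e.1 ∈ D := by_contra fun h => he ⟨⟨e, h⟩, by simp, rfl⟩
        simp [this]
      · intro e _
        simp [e.2]
  exact ⟨⟨y, hy⟩, funext fun e => by simpa [ρ, LinearMap.funLeft, e.2] using hyz e.1 e.2⟩

end MGraph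

end Cosimplification

/-- connected graphs with `L(G₁) = L(G₂)`, at least two circuits,
and `|V(co(G₁))| ≥ 5` are 2-isomorphic. -/
theorem twoIso_of_co_five_vertices
    {V₁ V₂ α : Type} [DecidableEq V₁] [DecidableEq V₂] [DecidableEq α]
    (G₁ : MGraph V₁ α) (G₂ : MGraph V₂ α)
    (hc₁ : G₁.Connected) (hc₂ : G₂.Connected)
    (hL : G₁.LiftEq G₂) (h2 : G₁.TwoLiftCircuits)
    (hco : ∃ D : Finset α, G₁.IsCoContractSet D ∧ 5 ≤ Nat.card (Quot (G₁.Adj D))) :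
    G₁.TwoIso G₂ := by
  classical
  obtain ⟨D, hD, hn⟩ := hco
  have := hc₁.finite
  have := Fintype.ofFinite (Quot (G₁.Adj D))
  rw [Nat.card_eq_fintype_card] at hn
  have : Nontrivial (Quot (G₁.Adj D)) := Fintype.one_lt_card_iff_nontrivial.1 (by omega)
  have hstar : ∀ q, 3 ≤ (G₁.quotStar D q).card := fun q =>
    hD.three_le_card (MGraph.quotStar_nonempty hc₁ q) (fun e he => MGraph.notMem_of_mem_quotStar he)
      (MGraph.sumZeroOn_quotStar q)
  have hsum := MGraph.sum_card_quotStar_le (G := G₁) (D := D)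
  have hdim := MGraph.card_sdiff_add_one_le (G := G₁) hD.1
  have htotal : 3 * Fintype.card (Quot (G₁.Adj D)) ≤ ∑ q, (G₁.quotStar D q).card := by
    have := Finset.card_nsmul_le_sum Finset.univ (fun q => (G₁.quotStar D q).card) 3
      fun q _ => hstar q
    rwa [Finset.card_univ, smul_eq_mul, mul_comm] at this
  have hiff := hL.hasTwoVanishingOn_iff
  have hr : Module.finrank (ZMod 2) (G₁.cycleSpace G₁.E) =
      Module.finrank (ZMod 2) (G₂.cycleSpace G₁.E) := by
    refine le_antisymm (finrank_le_of_hasTwoVanishingOn_iff (fun J => (hiff J).symm) ?_)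
      (finrank_le_of_hasTwoVanishingOn_iff hiff (by omega))
    have h0 : HasTwoVanishingOn (G₁.cycleSpace G₁.E) ∅ := by
      by_contra hno
      have := finrank_le_succ_card_of_not_hasTwoVanishingOn hno
      have := span_coordOn_image_finrank_le_card (G₁.cycleSpace G₁.E) ∅
      simp only [Finset.card_empty] at this
      omega
    obtain ⟨a, ha, -, -, ha0, -⟩ := (hiff ∅).1 h0
    exact Module.finrank_pos_iff_exists_ne_zero.2 ⟨⟨a, ha⟩, by simpa using ha0⟩
  have htransfer := SumZeroOn.of_hasTwoVanishingOn_iff hiff hr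
  refine MGraph.twoIso_of_cycleSpace_eq hL.1
    (Submodule.eq_of_le_of_finrank_eq (fun z hz => ?_) hr.symm).symm
  have hsmall : ∀ q q', q ≠ q' →
      (G₁.quotStar D q).card + 1 ≤ Module.finrank (ZMod 2) (G₁.cycleSpace G₁.E) ∨
        (G₁.quotStar D q').card + 1 ≤ Module.finrank (ZMod 2) (G₁.cycleSpace G₁.E) := by
    intro q q' hqq'
    by_contra! hbig
    have hrest := Finset.card_nsmul_le_sum (Finset.univ \ {q, q'})
      (fun q => (G₁.quotStar D q).card) 3 fun q _ => hstar q
    have hsplit := Finset.sum_sdiff (f := fun q => (G₁.quotStar D q).card)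
      (Finset.subset_univ {q, q'})
    rw [Finset.sum_pair hqq'] at hsplit
    rw [Finset.card_sdiff_of_subset (Finset.subset_univ _), Finset.card_pair hqq',
      Finset.card_univ, smul_eq_mul] at hrest
    omega
  have hgood : ∀ q, (G₁.quotStar D q).card + 1 ≤
      Module.finrank (ZMod 2) (G₁.cycleSpace G₁.E) → ∑ e ∈ G₁.quotStar D q, z e = 0 :=
    fun q hq => htransfer _ hq (MGraph.sumZeroOn_quotStar q) z hz
  have hall : ∀ q, ∑ e ∈ G₁.quotStar D q, z e = 0 := by
    intro q
    have h0 := sum_boundary (ends := G₁.quotEnds D) (U := Finset.univ)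
      (fun _ v _ => Finset.mem_univ v) z
    simp only [← MGraph.sum_quotStar] at h0
    by_cases hq : (G₁.quotStar D q).card + 1 ≤ Module.finrank (ZMod 2) (G₁.cycleSpace G₁.E)
    · exact hgood q hq
    · rwa [Finset.sum_eq_single_of_mem q (Finset.mem_univ q) fun q' _ hq' =>
        hgood q' ((hsmall q q' hq'.symm).resolve_left hq)] at h0
  obtain ⟨y, hy, hyz⟩ := MGraph.exists_mem_cycleSpace_eq_off hD.1 hall
  suffices z = y by rwa [this]
  ext e
  by_cases heD : e.1 ∈ D
  swap
  · exact (hyz e heD).symm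
  by_cases hcut : G₁.IsCutEdge e
  · rw [MGraph.isCutEdge_iff_sumZeroOn] at hcut
    have h1 := htransfer _ (by rw [Finset.card_singleton]; omega) hcut z hz
    have h2 := hcut y hy
    rw [Finset.sum_singleton] at h1 h2
    rw [h1, h2]
  · obtain ⟨X, hX, hcard⟩ := hD.card_sdiff_eq_one_of_notCutEdge e.2 hcut
    obtain ⟨f, hf⟩ := Finset.card_pos.1 (hcard ▸ Nat.one_pos)
    rw [Finset.mem_sdiff, hX] at hf
    have hne : e ≠ ⟨f, hf.1.2.1⟩ := fun h =>
      hf.2 (by rw [h] at heD; exact heD)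
    have hser := (MGraph.seriesPair_iff_sumZeroOn (f := ⟨f, hf.1.2.1⟩) hne).1 hf.1
    have h1 := htransfer _ (by rw [Finset.card_pair hne]; omega) hser z hz
    have h2 := hser y hy
    rw [Finset.sum_pair hne, CharTwo.add_eq_zero] at h1 h2
    rw [h1, h2, hyz _ hf.2]
end

section
/- The converse of the previous implication fails: there exist graphs G1 and G2 on the same edge set with L(G1) = L(G2) but M(G1) ≠ M(G2). Concretely, two different labelings of K_4 on the same 6-element edge set give equal bicircular lift matroids (both isomorphic to the uniform-like matroid whose circuits are all 4-edge subsets forming two cycles or theta subgraphs of K_4) while their graphic matroids differ. -/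
open Finset

/-- `G` is a labelling of `K₄` on the edge set `Fin 6`: all six edges are
present, loopless, with pairwise distinct endpoint pairs (hence all six vertex
pairs occur). -/
def IsLabelledK4 (G : MGraph (Fin 4) (Fin 6)) : Prop :=
  G.E = Finset.univ ∧ (∀ e : Fin 6, ¬ (G.ends e).IsDiag) ∧ Function.Injective G.ends

namespace MGraph

section

variable {V α : Type} [DecidableEq V]

instance (G : MGraph V α) (X : Finset α) (u v : V) : Decidable (G.Adj X u v) :=
  inferInstanceAs (Decidable (∃ e ∈ X, G.ends e = s(u, v)))

instance (G : MGraph V α) (X : Finset α) (v : V) : Decidable (G.VIn X v) :=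
  inferInstanceAs (Decidable (∃ e ∈ X, v ∈ G.ends e))

/-- If every nonempty 2-regular edge set has diameter at most two, then the cycles are exactly
the nonempty 2-regular edge sets. -/
theorem isCycle_iff_of_diam_le_two {G : MGraph V α} {C : Finset α}
    (hdiam : C.Nonempty → (∀ v, G.VIn C v → G.degIn C v = 2) →
      ∀ u v, G.VIn C u → G.VIn C v →
        ∃ w, (u = w ∨ G.Adj C u w) ∧ (w = v ∨ G.Adj C w v)) :
    G.IsCycle C ↔ C.Nonempty ∧ C ⊆ G.E ∧ ∀ v, G.VIn C v → G.degIn C v = 2 := by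
  refine ⟨fun h => ⟨h.1, h.2.1, h.2.2.1⟩, fun h => ⟨h.1, h.2.1, h.2.2, fun u v hu hv => ?_⟩⟩
  have step : ∀ {a b : V}, (a = b ∨ G.Adj C a b) → Relation.ReflTransGen (G.Adj C) a b := by
    rintro a b (rfl | hab)
    · exact .refl
    · exact .single hab
  obtain ⟨w, huw, hwv⟩ := hdiam h.1 h.2.2 u v hu hv
  exact (step huw).trans (step hwv)

/-- If any two distinct cycles span at least `n` edges, and every set of `n` edges contains two
distinct cycles, then the circuits of `L(G)` are the `n`-element sets of edges. -/
theorem liftCircuit_iff_card_eq [DecidableEq α] {G : MGraph V α} {n : ℕ}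
    (hunion : ∀ C₁ C₂, G.IsCycle C₁ → G.IsCycle C₂ → C₁ ≠ C₂ → n ≤ #(C₁ ∪ C₂))
    (htwo : ∀ X ⊆ G.E, #X = n → G.TwoCycles X) (X : Finset α) :
    G.LiftCircuit X ↔ X ⊆ G.E ∧ #X = n := by
  have hle : ∀ Y, G.TwoCycles Y → n ≤ #Y := by
    rintro Y ⟨C₁, C₂, h₁, h₂, h₁Y, h₂Y, hne⟩
    exact (hunion C₁ C₂ h₁ h₂ hne).trans (card_le_card (union_subset h₁Y h₂Y))
  constructor
  · rintro ⟨hXE, hX, hmin⟩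
    refine ⟨hXE, (hle X hX).antisymm' ?_⟩
    obtain ⟨Y, hYX, hY⟩ := exists_subset_card_eq (hle X hX)
    by_contra! hlt
    have hss : Y ⊂ X := hYX.ssubset_of_ne (by rintro rfl; omega)
    exact hmin Y hss (htwo Y (hYX.trans hXE) hY)
  · rintro ⟨hXE, hX⟩
    refine ⟨hXE, htwo X hXE hX, fun Y hYX hY => ?_⟩
    have := hle Y hY
    have := card_lt_card hYX
    omega

end

end MGraph

/-- The labelling of `K₄` by the lexicographic order of its edges. -/
def lexK4 : MGraph (Fin 4) (Fin 6) :=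
  ⟨univ, ![s(0, 1), s(0, 2), s(0, 3), s(1, 2), s(1, 3), s(2, 3)]⟩

/-- The labelling of `K₄` obtained from `lexK4` by swapping the first two edges. -/
def swapK4 : MGraph (Fin 4) (Fin 6) :=
  ⟨univ, ![s(0, 2), s(0, 1), s(0, 3), s(1, 2), s(1, 3), s(2, 3)]⟩

/-- The triangles and 4-cycles of `lexK4`. -/
def lexK4Cycles : Finset (Finset (Fin 6)) :=
  {{0, 1, 3}, {0, 2, 4}, {1, 2, 5}, {3, 4, 5}, {0, 1, 4, 5}, {0, 2, 3, 5}, {1, 2, 3, 4}}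

/-- The triangles and 4-cycles of `swapK4`. -/
def swapK4Cycles : Finset (Finset (Fin 6)) :=
  {{0, 1, 3}, {1, 2, 4}, {0, 2, 5}, {3, 4, 5}, {0, 1, 4, 5}, {1, 2, 3, 5}, {0, 2, 3, 4}}

theorem lexK4_isCycle_iff (C : Finset (Fin 6)) : lexK4.IsCycle C ↔ C ∈ lexK4Cycles := by
  rw [MGraph.isCycle_iff_of_diam_le_two (by revert C; unfold MGraph.degIn; decide +kernel)]
  revert C; unfold MGraph.degIn; decide +kernel

theorem swapK4_isCycle_iff (C : Finset (Fin 6)) : swapK4.IsCycle C ↔ C ∈ swapK4Cycles := by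
  rw [MGraph.isCycle_iff_of_diam_le_two (by revert C; unfold MGraph.degIn; decide +kernel)]
  revert C; unfold MGraph.degIn; decide +kernel

theorem lexK4_liftCircuit_iff (X : Finset (Fin 6)) : lexK4.LiftCircuit X ↔ #X = 5 := by
  rw [MGraph.liftCircuit_iff_card_eq (n := 5)]
  · simp [lexK4]
  · simp only [lexK4_isCycle_iff]
    have : ∀ C₁ ∈ lexK4Cycles, ∀ C₂ ∈ lexK4Cycles, C₁ ≠ C₂ → 5 ≤ #(C₁ ∪ C₂) := by decide +kernel
    exact fun C₁ C₂ h₁ h₂ => this C₁ h₁ C₂ h₂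
  · have : ∀ X : Finset (Fin 6), #X = 5 →
        ∃ C₁ ∈ lexK4Cycles, ∃ C₂ ∈ lexK4Cycles, C₁ ⊆ X ∧ C₂ ⊆ X ∧ C₁ ≠ C₂ := by decide +kernel
    intro X _ hX
    obtain ⟨C₁, h₁, C₂, h₂, h⟩ := this X hX
    exact ⟨C₁, C₂, (lexK4_isCycle_iff C₁).2 h₁, (lexK4_isCycle_iff C₂).2 h₂, h⟩

theorem swapK4_liftCircuit_iff (X : Finset (Fin 6)) : swapK4.LiftCircuit X ↔ #X = 5 := by
  rw [MGraph.liftCircuit_iff_card_eq (n := 5)]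
  · simp [swapK4]
  · simp only [swapK4_isCycle_iff]
    have : ∀ C₁ ∈ swapK4Cycles, ∀ C₂ ∈ swapK4Cycles, C₁ ≠ C₂ → 5 ≤ #(C₁ ∪ C₂) := by
      decide +kernel
    exact fun C₁ C₂ h₁ h₂ => this C₁ h₁ C₂ h₂
  · have : ∀ X : Finset (Fin 6), #X = 5 →
        ∃ C₁ ∈ swapK4Cycles, ∃ C₂ ∈ swapK4Cycles, C₁ ⊆ X ∧ C₂ ⊆ X ∧ C₁ ≠ C₂ := by decide +kernel
    intro X _ hX
    obtain ⟨C₁, h₁, C₂, h₂, h⟩ := this X hX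
    exact ⟨C₁, C₂, (swapK4_isCycle_iff C₁).2 h₁, (swapK4_isCycle_iff C₂).2 h₂, h⟩

/-- there are two labelings of `K₄` on the same 6-element edge set
with equal bicircular lift matroids but different graphic matroids. -/
theorem liftEq_not_imp_twoIso :
    ∃ G₁ G₂ : MGraph (Fin 4) (Fin 6),
      IsLabelledK4 G₁ ∧ IsLabelledK4 G₂ ∧ G₁.LiftEq G₂ ∧ ¬ G₁.TwoIso G₂ := by
  refine ⟨lexK4, swapK4, ⟨rfl, by decide, by decide⟩, ⟨rfl, by decide, by decide⟩,
    ⟨rfl, fun X => ?_⟩, fun h => ?_⟩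
  · rw [lexK4_liftCircuit_iff, swapK4_liftCircuit_iff]
  · have := h.2 {0, 2, 4}
    rw [lexK4_isCycle_iff, swapK4_isCycle_iff] at this
    revert this
    decide
end
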